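/- arXiv:0811.2777 — 8 statements merged into one kernel-verified Lean document; each statement's English description precedes it below -/
import Mathlib

section
/- Each of the six bijections α, β, γ, a, b, c is an involution (its composition with itself is the identity), and the following conjugation relations hold in Γ: a∘α∘a = α, b∘α∘b = α, c∘α∘c = α, a∘β∘a = β, b∘β∘b = β, c∘β∘c = γ∘β∘γ, a∘γ∘a = α∘γ∘α, b∘γ∘b = β∘γ∘β, c∘γ∘c = γ. -/
/-!
An automorphism of the word tree is determined by its action on the first letter and by its
sections, the maps induced on the remaining letters. Comparing these for both sides of each
relation reduces it to relations on words that are one letter shorter.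

The relations among `α`, `β`, `γ`, `a` follow directly from the recursions (`β² = γ² = 1` by a joint
induction). The relations involving `b` and `c` feed into each other: for instance
`c² = 1` needs `b² = 1` and `bβ = βb`, while `bβ = βb` needs `cα = αc` and `cγ = γc`. They are
proved together in `relationsAt_of_length`, by induction on the length of the word rather than on
the word itself, since a section may require a relation at the image of the tail under `α` or
`γ`; these preserve length, so the induction hypothesis applies there.
-/

/-- The alphabet `X = {1,2,3,4}`, encoded as `Fin 4` (letter i ↔ `i-1`). -/
abbrev Alph : Type := Fin 4

/-- The set `X*` of finite words over the alphabet. -/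
abbrev Word : Type := List Alph

/-- The permutation σ = (12)(34) of the alphabet. -/
def permSigma : Alph → Alph := ![1, 0, 3, 2]

/-- The permutation π = (13)(24) of the alphabet. -/
def permPi : Alph → Alph := ![2, 3, 0, 1]

/-- A system of six bijections α, β, γ, a, b, c of `X*` satisfying the defining
recursions (each fixes the empty word; the recursions uniquely determine them). -/
structure NekSystem where
  α : Equiv.Perm Word
  β : Equiv.Perm Word
  γ : Equiv.Perm Word
  a : Equiv.Perm Word
  b : Equiv.Perm Word
  c : Equiv.Perm Word
  hαnil : α [] = []
  hβnil : β [] = []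
  hγnil : γ [] = []
  hanil : a [] = []
  hbnil : b [] = []
  hcnil : c [] = []
  hα : ∀ (x : Alph) (w : Word), α (x :: w) = permSigma x :: w
  ha : ∀ (x : Alph) (w : Word), a (x :: w) = permPi x :: w
  hβ0 : ∀ w : Word, β (0 :: w) = 0 :: α w
  hβ1 : ∀ w : Word, β (1 :: w) = 1 :: γ w
  hβ2 : ∀ w : Word, β (2 :: w) = 2 :: α w
  hβ3 : ∀ w : Word, β (3 :: w) = 3 :: γ w
  hγ0 : ∀ w : Word, γ (0 :: w) = 0 :: β w
  hγ1 : ∀ w : Word, γ (1 :: w) = 1 :: w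
  hγ2 : ∀ w : Word, γ (2 :: w) = 2 :: w
  hγ3 : ∀ w : Word, γ (3 :: w) = 3 :: β w
  hb0 : ∀ w : Word, b (0 :: w) = 0 :: a (α w)
  hb1 : ∀ w : Word, b (1 :: w) = 1 :: a (α w)
  hb2 : ∀ w : Word, b (2 :: w) = 2 :: c w
  hb3 : ∀ w : Word, b (3 :: w) = 3 :: c w
  hc0 : ∀ w : Word, c (0 :: w) = 0 :: b (β w)
  hc1 : ∀ w : Word, c (1 :: w) = 1 :: b (β w)
  hc2 : ∀ w : Word, c (2 :: w) = 2 :: b w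
  hc3 : ∀ w : Word, c (3 :: w) = 3 :: b w

namespace NekSystem

variable (S : NekSystem)

lemma alpha_alpha (w : Word) : S.α (S.α w) = w := by
  cases w with
  | nil => simp [S.hαnil]
  | cons x w => fin_cases x <;> simp [S.hα, permSigma]

lemma a_a (w : Word) : S.a (S.a w) = w := by
  cases w with
  | nil => simp [S.hanil]
  | cons x w => fin_cases x <;> simp [S.ha, permPi]

lemma a_alpha (w : Word) : S.a (S.α w) = S.α (S.a w) := by
  cases w with
  | nil => simp [S.hanil, S.hαnil]
  | cons x w => fin_cases x <;> simp [S.ha, S.hα, permPi, permSigma]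

lemma beta_beta_and_gamma_gamma (w : Word) : S.β (S.β w) = w ∧ S.γ (S.γ w) = w := by
  induction w with
  | nil => simp [S.hβnil, S.hγnil]
  | cons x w ih =>
    obtain ⟨hβ, hγ⟩ := ih
    fin_cases x <;>
      simp [S.hβ0, S.hβ1, S.hβ2, S.hβ3, S.hγ0, S.hγ1, S.hγ2, S.hγ3, S.alpha_alpha, hβ, hγ]

lemma beta_beta (w : Word) : S.β (S.β w) = w := (S.beta_beta_and_gamma_gamma w).1

lemma gamma_gamma (w : Word) : S.γ (S.γ w) = w := (S.beta_beta_and_gamma_gamma w).2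

lemma a_beta (w : Word) : S.a (S.β w) = S.β (S.a w) := by
  cases w with
  | nil => simp [S.hanil, S.hβnil]
  | cons x w => fin_cases x <;> simp [S.ha, permPi, S.hβ0, S.hβ1, S.hβ2, S.hβ3]

lemma a_gamma (w : Word) : S.a (S.γ w) = S.α (S.γ (S.α (S.a w))) := by
  cases w with
  | nil => simp [S.hanil, S.hαnil, S.hγnil]
  | cons x w =>
    fin_cases x <;> simp [S.ha, S.hα, permPi, permSigma, S.hγ0, S.hγ1, S.hγ2, S.hγ3]

lemma length_alpha (w : Word) : (S.α w).length = w.length := by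
  cases w <;> simp [S.hαnil, S.hα]

lemma length_beta_and_gamma (w : Word) :
    (S.β w).length = w.length ∧ (S.γ w).length = w.length := by
  induction w with
  | nil => simp [S.hβnil, S.hγnil]
  | cons x w ih =>
    obtain ⟨hβ, hγ⟩ := ih
    fin_cases x <;>
      simp [S.hβ0, S.hβ1, S.hβ2, S.hβ3, S.hγ0, S.hγ1, S.hγ2, S.hγ3, S.length_alpha, hβ, hγ]

lemma length_gamma (w : Word) : (S.γ w).length = w.length := (S.length_beta_and_gamma w).2

/-- The relations involving `b` and `c`, evaluated at one word. The conjugation relations are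
written as commutation rules, moving `b` and `c` to the right past `α`, `β`, `γ`. -/
structure RelationsAt (w : Word) : Prop where
  bb : S.b (S.b w) = w
  cc : S.c (S.c w) = w
  bα : S.b (S.α w) = S.α (S.b w)
  cα : S.c (S.α w) = S.α (S.c w)
  bβ : S.b (S.β w) = S.β (S.b w)
  cβ : S.c (S.β w) = S.γ (S.β (S.γ (S.c w)))
  bγ : S.b (S.γ w) = S.β (S.γ (S.β (S.b w)))
  cγ : S.c (S.γ w) = S.γ (S.c w)

lemma relationsAt_of_length (n : ℕ) : ∀ w : Word, w.length = n → S.RelationsAt w := by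
  induction n with
  | zero =>
    intro w hw
    rw [List.length_eq_zero_iff.1 hw]
    constructor <;> simp [S.hαnil, S.hβnil, S.hγnil, S.hbnil, S.hcnil]
  | succ n ih =>
    rintro (_ | ⟨x, w⟩) hw
    · simp at hw
    · have hw' : w.length = n := by simpa using hw
      have hbb := fun v hv => (ih v hv).bb
      have hcc := fun v hv => (ih v hv).cc
      have hbα := fun v hv => (ih v hv).bα
      have hcα := fun v hv => (ih v hv).cα
      have hbβ := fun v hv => (ih v hv).bβ
      have hcβ := fun v hv => (ih v hv).cβ
      have hbγ := fun v hv => (ih v hv).bγ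
      have hcγ := fun v hv => (ih v hv).cγ
      constructor <;> fin_cases x <;>
        simp [S.hα, permSigma, S.hβ0, S.hβ1, S.hβ2, S.hβ3, S.hγ0, S.hγ1, S.hγ2, S.hγ3,
          S.hb0, S.hb1, S.hb2, S.hb3, S.hc0, S.hc1, S.hc2, S.hc3,
          S.length_alpha, S.length_gamma, hw',
          S.alpha_alpha, S.a_a, S.beta_beta, S.gamma_gamma, S.a_alpha, S.a_beta, S.a_gamma,
          hbb, hcc, hbα, hcα, hbβ, hcβ, hbγ, hcγ]

lemma relationsAt (w : Word) : S.RelationsAt w := S.relationsAt_of_length _ w rfl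

end NekSystem

/-- Each of α, β, γ, a, b, c is an involution, and the stated conjugation
relations hold in Γ (products are compositions, `(g*h) w = g (h w)`). -/
theorem statement1 (S : NekSystem) :
    (S.α * S.α = 1 ∧ S.β * S.β = 1 ∧ S.γ * S.γ = 1 ∧
      S.a * S.a = 1 ∧ S.b * S.b = 1 ∧ S.c * S.c = 1) ∧
    (S.a * S.α * S.a = S.α ∧ S.b * S.α * S.b = S.α ∧ S.c * S.α * S.c = S.α ∧
      S.a * S.β * S.a = S.β ∧ S.b * S.β * S.b = S.β ∧
      S.c * S.β * S.c = S.γ * S.β * S.γ ∧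
      S.a * S.γ * S.a = S.α * S.γ * S.α ∧
      S.b * S.γ * S.b = S.β * S.γ * S.β ∧
      S.c * S.γ * S.c = S.γ) := by
  refine ⟨⟨?_, ?_, ?_, ?_, ?_, ?_⟩, ?_, ?_, ?_, ?_, ?_, ?_, ?_, ?_, ?_⟩ <;> ext1 w <;>
    simp [S.alpha_alpha, S.a_a, S.beta_beta, S.gamma_gamma, S.a_alpha, S.a_beta, S.a_gamma,
      (S.relationsAt _).bb, (S.relationsAt _).cc, (S.relationsAt _).bα, (S.relationsAt _).cα,
      (S.relationsAt _).bβ, (S.relationsAt _).cβ, (S.relationsAt _).bγ, (S.relationsAt _).cγ]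
end

section
/- In the group Γ the relations (α∘γ)^4 = id, (α∘β)^8 = id, and (β∘γ)^8 = id hold. -/
namespace NekSystem

variable (S : NekSystem)

lemma alpha_gamma_pow_four : (S.α * S.γ) ^ 4 = 1 := by
  ext1 w
  cases w with
  | nil => simp [pow_succ, S.hαnil, S.hγnil]
  | cons x w =>
    fin_cases x <;>
      simp [pow_succ, S.hα, permSigma, S.hγ0, S.hγ1, S.hγ2, S.hγ3, S.beta_beta]

lemma mul_pow_swap {G : Type*} [Group G] {g h : G} {n : ℕ} (hg : g * g = 1) (hh : h * h = 1)
    (hn : (g * h) ^ n = 1) : (h * g) ^ n = 1 := by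
  have hinv : h * g = (g * h)⁻¹ := by
    rw [mul_inv_rev, inv_eq_of_mul_eq_one_left hg, inv_eq_of_mul_eq_one_left hh]
  rw [hinv, inv_pow, hn, inv_one]

lemma alpha_sq : S.α * S.α = 1 := Equiv.ext S.alpha_alpha

lemma beta_sq : S.β * S.β = 1 := Equiv.ext S.beta_beta

lemma gamma_sq : S.γ * S.γ = 1 := Equiv.ext S.gamma_gamma

lemma alpha_beta_pow_eight : (S.α * S.β) ^ 8 = 1 := by
  have hαγ (w : Word) := congrArg (fun g : Equiv.Perm Word => g w) S.alpha_gamma_pow_four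
  have hγα (w : Word) := congrArg (fun g : Equiv.Perm Word => g w)
    (mul_pow_swap S.alpha_sq S.gamma_sq S.alpha_gamma_pow_four)
  simp only [pow_succ, pow_zero, one_mul, Equiv.Perm.mul_apply, Equiv.Perm.one_apply] at hαγ hγα
  ext1 w
  cases w with
  | nil => simp [pow_succ, S.hαnil, S.hβnil]
  | cons x w =>
    fin_cases x <;>
      simp [pow_succ, S.hα, permSigma, S.hβ0, S.hβ1, S.hβ2, S.hβ3, hαγ, hγα]

lemma beta_gamma_pow_eight : (S.β * S.γ) ^ 8 = 1 := by
  have hαβ (w : Word) := congrArg (fun g : Equiv.Perm Word => g w) S.alpha_beta_pow_eight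
  have hβα (w : Word) := congrArg (fun g : Equiv.Perm Word => g w)
    (mul_pow_swap S.alpha_sq S.beta_sq S.alpha_beta_pow_eight)
  simp only [pow_succ, pow_zero, one_mul, Equiv.Perm.mul_apply, Equiv.Perm.one_apply] at hαβ hβα
  -- Below the letter `3` (the fourth letter) the products `βγ` and `γβ` act by one another.
  have key (w : Word) : ((S.β * S.γ) ^ 8) w = w ∧ ((S.γ * S.β) ^ 8) w = w := by
    simp only [pow_succ, pow_zero, one_mul, Equiv.Perm.mul_apply]
    induction w with
    | nil => simp [S.hβnil, S.hγnil]
    | cons x w ih =>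
      fin_cases x <;>
        simp [S.hβ0, S.hβ1, S.hβ2, S.hβ3, S.hγ0, S.hγ1, S.hγ2, S.hγ3, S.alpha_alpha,
          S.gamma_gamma, hαβ, hβα, ih.1, ih.2]
  exact Equiv.ext fun w => (key w).1

end NekSystem

/-- In the group Γ the relations (α∘γ)⁴ = id, (α∘β)⁸ = id and (β∘γ)⁸ = id hold. -/
theorem statement2 (S : NekSystem) :
    (S.α * S.γ) ^ 4 = 1 ∧ (S.α * S.β) ^ 8 = 1 ∧ (S.β * S.γ) ^ 8 = 1 := by
  exact ⟨S.alpha_gamma_pow_four, S.alpha_beta_pow_eight, S.beta_gamma_pow_eight⟩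
end

section
/- In the group Γ the following hold: (a∘c)^2 = (α∘γ)^2, (a∘b)^4 = (α∘β)^4, and (b∘c)^4 = id; the element a∘b has order 8, the element a∘c has order 4, and the element b∘c has order 4; moreover the element a∘c∘γ has order 2 and the element a∘α∘b∘β has order 4. -/
/-- Formal symbols for the six generators. -/
inductive Gen
  | α | β | γ | a | b | c
  deriving DecidableEq

namespace Gen

/-- The action of a generator on the first letter of a word. -/
def act : Gen → Alph → Alph
  | .α => permSigma
  | .a => permPi
  | _ => id

/-- The section of a generator at a letter: the product of generators applied to the rest of a
word that starts with this letter. -/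
def sec : Gen → Alph → List Gen
  | .α => fun _ => []
  | .a => fun _ => []
  | .β => ![[.α], [.γ], [.α], [.γ]]
  | .γ => ![[.β], [], [], [.β]]
  | .b => ![[.a, .α], [.a, .α], [.c], [.c]]
  | .c => ![[.b, .β], [.b, .β], [.b], [.b]]

/-- The action on the first letter of a product of generators (the rightmost factor acts first). -/
def actL : List Gen → Alph → Alph
  | [], x => x
  | g :: w, x => g.act (actL w x)

/-- The section of a product of generators at a letter, by the rule
`(g w)|ₓ = g|_{w(x)} · w|ₓ`. -/
def secL : List Gen → Alph → List Gen
  | [], _ => []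
  | g :: w, x => g.sec (actL w x) ++ secL w x

/-- Cancellation of adjacent equal generators. -/
def cancel : List Gen → List Gen
  | [] => []
  | g :: w =>
    match cancel w with
    | [] => [g]
    | h :: t => if g = h then t else g :: h :: t

/-- The formal power of a product of generators. -/
def pow (w : List Gen) (n : ℕ) : List Gen := (List.replicate n w).flatten

/-- A finite set of products of generators that contains the squares of the generators and the
relators of interest and is closed under sections up to cancellation. -/
def relators : List (List Gen) :=
  [[],
   pow [.α] 2,
   pow [.β] 2,
   pow [.γ] 2,
   pow [.a] 2,
   pow [.b] 2,
   pow [.c] 2,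
   pow [.α, .c] 2,
   pow [.β, .b] 2,
   pow [.γ, .c] 2,
   pow [.a, .α] 2,
   pow [.b, .β] 2,
   pow [.c, .α] 2,
   pow [.c, .γ] 2,
   pow [.γ, .a, .α] 2,
   pow [.a, .α, .γ] 2,
   pow [.a, .c, .γ] 2,
   pow [.c, .γ, .a] 2,
   pow [.a, .c] 2 ++ pow [.γ, .α] 2,
   pow [.a, .c] 4,
   pow [.b, .c] 4,
   [.c, .a, .α, .c, .a, .γ, .α, .γ],
   pow [.c, .b] 4,
   pow [.a, .α, .γ, .c, .α] 2,
   pow [.a, .α, .c] 2 ++ pow [.α, .γ] 2,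
   pow [.a, .α, .c] 2 ++ pow [.γ, .α] 2,
   pow [.c, .α, .a, .α, .γ] 2,
   pow [.c, .a, .α] 2 ++ pow [.γ, .α] 2,
   pow [.a, .α, .c] 4,
   pow [.c, .a, .α] 4,
   pow [.a, .α, .b, .β] 4,
   pow [.a, .b] 4 ++ pow [.β, .α] 4,
   pow [.a, .b] 8,
   pow [.b, .β, .a, .α] 4]

theorem relators_closed :
    ∀ w ∈ relators, ∀ x : Alph, actL w x = x ∧ cancel (secL w x) ∈ relators := by
  decide +kernel

theorem square_mem_relators (g : Gen) : [g, g] ∈ relators := by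
  cases g <;> decide +kernel

/-- The bijection of words denoted by a generator. -/
def toPerm (S : NekSystem) : Gen → Equiv.Perm Word
  | .α => S.α
  | .β => S.β
  | .γ => S.γ
  | .a => S.a
  | .b => S.b
  | .c => S.c

/-- The bijection of words denoted by a product of generators. -/
def ev (S : NekSystem) (w : List Gen) : Equiv.Perm Word := (w.map (toPerm S)).prod

variable (S : NekSystem)

@[simp] theorem ev_nil : ev S [] = 1 := rfl

@[simp] theorem ev_cons (g : Gen) (w : List Gen) : ev S (g :: w) = toPerm S g * ev S w := by
  simp [ev]

theorem ev_append (u w : List Gen) : ev S (u ++ w) = ev S u * ev S w := by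
  simp [ev]

theorem ev_pow (w : List Gen) (n : ℕ) : ev S (pow w n) = ev S w ^ n := by
  induction n with
  | zero => rfl
  | succ n ih =>
    rw [pow_succ', ← ih, ← ev_append]
    rfl

theorem toPerm_nil (g : Gen) : toPerm S g [] = [] := by
  cases g
  exacts [S.hαnil, S.hβnil, S.hγnil, S.hanil, S.hbnil, S.hcnil]

theorem toPerm_apply_cons (g : Gen) (x : Alph) (v : Word) :
    toPerm S g (x :: v) = g.act x :: ev S (g.sec x) v := by
  cases g
  case α => exact S.hα x v
  case a => exact S.ha x v
  case β => fin_cases x; exacts [S.hβ0 v, S.hβ1 v, S.hβ2 v, S.hβ3 v]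
  case γ => fin_cases x; exacts [S.hγ0 v, S.hγ1 v, S.hγ2 v, S.hγ3 v]
  case b => fin_cases x; exacts [S.hb0 v, S.hb1 v, S.hb2 v, S.hb3 v]
  case c => fin_cases x; exacts [S.hc0 v, S.hc1 v, S.hc2 v, S.hc3 v]

theorem ev_apply_nil (w : List Gen) : ev S w [] = [] := by
  induction w with
  | nil => rfl
  | cons g w ih => rw [ev_cons, Equiv.Perm.mul_apply, ih, toPerm_nil]

theorem ev_apply_cons (w : List Gen) (x : Alph) (v : Word) :
    ev S w (x :: v) = actL w x :: ev S (secL w x) v := by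
  induction w with
  | nil => rfl
  | cons g w ih =>
    rw [ev_cons, Equiv.Perm.mul_apply, ih, toPerm_apply_cons]
    simp [secL, actL, ev_append]

theorem length_ev_apply (w : List Gen) (v : Word) : (ev S w v).length = v.length := by
  induction v generalizing w with
  | nil => rw [ev_apply_nil]
  | cons x v ih => simp [ev_apply_cons, ih]

/-- Cancellation does not change the action on the words of length `n`, provided the squares of
the generators act trivially on them. -/
theorem ev_cancel {n : ℕ} (hsq : ∀ (g : Gen) (v : Word), v.length = n → ev S [g, g] v = v)
    (w : List Gen) (v : Word) (hv : v.length = n) : ev S (cancel w) v = ev S w v := by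
  induction w with
  | nil => rfl
  | cons g w ih =>
    rw [cancel, ev_cons, Equiv.Perm.mul_apply, ← ih]
    split
    · next h => simp [h]
    · next k t h =>
      rw [h]
      split_ifs with hg
      · subst hg
        have := hsq g (ev S t v) (by rw [length_ev_apply, hv])
        simpa using this.symm
      · simp

/-- All the products in `relators` are trivial, by induction on the length of the word acted
upon. -/
theorem ev_eq_one {w : List Gen} (hw : w ∈ relators) : ev S w = 1 := by
  have key : ∀ (n : ℕ), ∀ w ∈ relators, ∀ v : Word, v.length = n → ev S w v = v := by
    intro n
    induction n with
    | zero =>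
      intro w _ v hv
      rw [List.length_eq_zero_iff.mp hv, ev_apply_nil]
    | succ n ih =>
      rintro w hw (_ | ⟨x, v⟩) hv
      · simp at hv
      · have hv' : v.length = n := by simpa using hv
        obtain ⟨hx, hs⟩ := relators_closed w hw x
        rw [ev_apply_cons, hx, ← ev_cancel S (fun g => ih _ (square_mem_relators g)) _ v hv',
          ih _ hs v hv']
  ext1 v
  exact key _ w hw v rfl

/-- The image of a word under a product of generators, as a computable function. -/
def run : List Gen → Word → Word
  | _, [] => []
  | w, x :: v => actL w x :: run (secL w x) v

theorem ev_apply_eq_run (w : List Gen) (v : Word) : ev S w v = run w v := by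
  induction v generalizing w with
  | nil => exact ev_apply_nil S w
  | cons x v ih => rw [ev_apply_cons, ih, run]

theorem ev_ne_one {w : List Gen} (v : Word) (h : run w v ≠ v) : ev S w ≠ 1 := by
  intro h1
  apply h
  rw [← ev_apply_eq_run S, h1, Equiv.Perm.one_apply]

/-- The order of a product of generators is `p ^ (n + 1)` if its `p ^ (n + 1)`-th power is a known
relator and its `p ^ n`-th power moves some word. -/
theorem orderOf_ev {p n : ℕ} [Fact p.Prime] {w : List Gen} (v : Word)
    (hne : run (pow w (p ^ n)) v ≠ v) (hmem : pow w (p ^ (n + 1)) ∈ relators) :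
    orderOf (ev S w) = p ^ (n + 1) := by
  apply orderOf_eq_prime_pow
  · rw [← ev_pow]
    exact ev_ne_one S v hne
  · rw [← ev_pow]
    exact ev_eq_one S hmem

theorem mul_self (g : Gen) : toPerm S g * toPerm S g = 1 := by
  simpa using ev_eq_one S (square_mem_relators g)

/-- As generators are involutions, `(g h)ⁿ` and `(h g)ⁿ` are mutually inverse. -/
theorem ev_pow_pair_swap (g h : Gen) (n : ℕ) : (ev S [g, h] ^ n)⁻¹ = ev S [h, g] ^ n := by
  have inv (k : Gen) : (toPerm S k)⁻¹ = toPerm S k := inv_eq_of_mul_eq_one_right (mul_self S k)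
  rw [← inv_pow]
  simp [inv]

/-- A relator of the form `u · (h g)ⁿ` gives the relation `u = (g h)ⁿ`. -/
theorem ev_eq_of_relator {u : List Gen} (g h : Gen) (n : ℕ)
    (hmem : u ++ pow [h, g] n ∈ relators) : ev S u = ev S [g, h] ^ n := by
  have := ev_eq_one S hmem
  rw [ev_append, ev_pow, ← ev_pow_pair_swap] at this
  exact mul_inv_eq_one.mp this

end Gen

/-- Relations (a∘c)² = (α∘γ)², (a∘b)⁴ = (α∘β)⁴, (b∘c)⁴ = id; the orders of
a∘b, a∘c, b∘c are 8, 4, 4, and the orders of a∘c∘γ and a∘α∘b∘β are 2 and 4. -/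
theorem statement3 (S : NekSystem) :
    (S.a * S.c) ^ 2 = (S.α * S.γ) ^ 2 ∧
    (S.a * S.b) ^ 4 = (S.α * S.β) ^ 4 ∧
    (S.b * S.c) ^ 4 = 1 ∧
    orderOf (S.a * S.b) = 8 ∧
    orderOf (S.a * S.c) = 4 ∧
    orderOf (S.b * S.c) = 4 ∧
    orderOf (S.a * S.c * S.γ) = 2 ∧
    orderOf (S.a * S.α * S.b * S.β) = 4 := by
  have hac : S.a * S.c = Gen.ev S [.a, .c] := rfl
  have hab : S.a * S.b = Gen.ev S [.a, .b] := rfl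
  have hbc : S.b * S.c = Gen.ev S [.b, .c] := rfl
  have hαγ : S.α * S.γ = Gen.ev S [.α, .γ] := rfl
  have hαβ : S.α * S.β = Gen.ev S [.α, .β] := rfl
  have hacγ : S.a * S.c * S.γ = Gen.ev S [.a, .c, .γ] := rfl
  have haαbβ : S.a * S.α * S.b * S.β = Gen.ev S [.a, .α, .b, .β] := rfl
  rw [haαbβ, hacγ, hac, hab, hbc, hαγ, hαβ]
  refine ⟨?_, ?_, ?_, ?_, ?_, ?_, ?_, ?_⟩
  · rw [← Gen.ev_pow]
    exact Gen.ev_eq_of_relator S .α .γ 2 (by decide +kernel)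
  · rw [← Gen.ev_pow]
    exact Gen.ev_eq_of_relator S .α .β 4 (by decide +kernel)
  · rw [← Gen.ev_pow]
    exact Gen.ev_eq_one S (by decide +kernel)
  · exact Gen.orderOf_ev (p := 2) (n := 2) S [0, 0, 0, 0] (by decide +kernel) (by decide +kernel)
  · exact Gen.orderOf_ev (p := 2) (n := 1) S [0, 0, 0] (by decide +kernel) (by decide +kernel)
  · exact Gen.orderOf_ev (p := 2) (n := 1) S [0, 0, 0] (by decide +kernel) (by decide +kernel)
  · exact Gen.orderOf_ev (p := 2) (n := 0) S [0] (by decide +kernel) (by decide +kernel)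
  · exact Gen.orderOf_ev (p := 2) (n := 1) S [0, 0] (by decide +kernel) (by decide +kernel)
end

section
/- The norms of products of the matrices I₁, I₂, I₃, I₄ tend to zero uniformly in the length of the product: for every ε > 0 there exists n₀ such that for every n ≥ n₀ and every sequence (x₁, x₂, …, x_n) ∈ {1,2,3,4}^n, the operator norm of the product I_{x₁}·I_{x₂}⋯I_{x_n} is less than ε. -/
/-!
All four matrices contract one common norm on `ℝ⁵` by the factor `19/20`, so a product of length
`n` has operator norm `O((19/20)ⁿ)`. The matrices are block lower triangular. The upper left `2 × 2`
blocks are `1/√2` times orthogonal matrices. The lower right `3 × 3` blocks contract the norm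
`max |y₂| (|y₃| / 1.2) |y₄| (|y₂ - y₃| / 1.8)` by `9/10`; the term `|y₂ - y₃|` is included because
the lower blocks of `I₂` and `I₃` depend on `y₂, y₃` only through this difference. Weighting the
first two coordinates by `20` makes the off-diagonal block cost at most another `1/20`
(`inBall_mulVec`). Comparison with the Euclidean norm gives the bound `40 * (19/20)ⁿ`
(`opNorm_prod_le`).
-/

/-- The matrix I₁. -/
noncomputable def I1 : Matrix (Fin 5) (Fin 5) ℝ :=
  !![-1/2, -1/2, 0, 0, 0;
     1/2, -1/2, 0, 0, 0;
     0, 0, 0, 1/2, 0;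
     0, 0, 0, 0, 1;
     0, 0, 1/2, 0, 0]

/-- The matrix I₂. -/
noncomputable def I2 : Matrix (Fin 5) (Fin 5) ℝ :=
  !![-1/2, -1/2, 0, 0, 0;
     1/2, -1/2, 0, 0, 0;
     0, 0, 0, 0, 0;
     0, 0, 0, 0, 0;
     1, 0, -1/2, 1/2, 0]

/-- The matrix I₃. -/
noncomputable def I3 : Matrix (Fin 5) (Fin 5) ℝ :=
  !![1/2, -1/2, 0, 0, 0;
     -1/2, -1/2, 0, 0, 0;
     1, 0, -1/2, 1/2, 0;
     0, 0, 0, 0, 0;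
     0, 0, 0, 0, 0]

/-- The matrix I₄. -/
noncomputable def I4 : Matrix (Fin 5) (Fin 5) ℝ :=
  !![1/2, -1/2, 0, 0, 0;
     -1/2, -1/2, 0, 0, 0;
     0, 0, 1/2, 0, 0;
     0, 0, 0, 0, 1;
     0, 0, 0, 1/2, 0]

/-- The family I₁, I₂, I₃, I₄ indexed by {1,2,3,4}. -/
noncomputable def Imat : Fin 4 → Matrix (Fin 5) (Fin 5) ℝ := ![I1, I2, I3, I4]

/-- The operator norm of a matrix acting on Euclidean ℝ⁵. -/
noncomputable def opNorm (M : Matrix (Fin 5) (Fin 5) ℝ) : ℝ :=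
  ‖LinearMap.toContinuousLinearMap (Matrix.toEuclideanLin M)‖

/-- The vector `v` lies in the ball of radius `t` of the adapted norm
`max (20 √(v₀² + v₁²)) |v₂| (|v₃| / 1.2) |v₄| (|v₂ - v₃| / 1.8)` (for `t ≥ 0`); the condition on the
first two coordinates is squared to avoid square roots. -/
def InBall (v : Fin 5 → ℝ) (t : ℝ) : Prop :=
  400 * (v 0 ^ 2 + v 1 ^ 2) ≤ t ^ 2 ∧ |v 2| ≤ t ∧ |v 3| ≤ 6 / 5 * t ∧ |v 4| ≤ t ∧
    |v 2 - v 3| ≤ 9 / 5 * t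

open Matrix in
lemma inBall_mulVec (i : Fin 4) {v : Fin 5 → ℝ} {t : ℝ} (ht : 0 ≤ t) (h : InBall v t) :
    InBall (Imat i *ᵥ v) (19 / 20 * t) := by
  obtain ⟨h0, h2, h3, h4, h5⟩ := h
  have h1 : |v 0| ≤ t / 20 := abs_le_of_sq_le_sq (by nlinarith [sq_nonneg (v 1)]) (by linarith)
  rw [abs_le] at h1 h2 h3 h4 h5
  obtain ⟨_, _⟩ := h1
  obtain ⟨_, _⟩ := h2
  obtain ⟨_, _⟩ := h3
  obtain ⟨_, _⟩ := h4
  obtain ⟨_, _⟩ := h5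
  fin_cases i <;>
    simp only [InBall, Imat, I1, I2, I3, I4, Matrix.mulVec, dotProduct, Fin.sum_univ_five,
      abs_le] <;>
    simp <;>
    refine ⟨by nlinarith [sq_nonneg t], ?_⟩ <;>
    repeat' apply And.intro
  all_goals linarith

open Matrix in
lemma inBall_prod_mulVec (l : List (Fin 4)) {v : Fin 5 → ℝ} {t : ℝ} (ht : 0 ≤ t)
    (h : InBall v t) : InBall ((l.map Imat).prod *ᵥ v) ((19 / 20) ^ l.length * t) := by
  induction l with
  | nil => simpa using h
  | cons i l ih =>
    rw [List.map_cons, List.prod_cons, ← Matrix.mulVec_mulVec, List.length_cons, pow_succ',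
      mul_assoc]
    exact inBall_mulVec i (by positivity) ih

lemma inBall_of_norm (v : EuclideanSpace ℝ (Fin 5)) : InBall v.ofLp (20 * ‖v‖) := by
  have hn := norm_nonneg v
  have hs := EuclideanSpace.real_norm_sq_eq v
  rw [Fin.sum_univ_five] at hs
  have hc : ∀ i, |v i| ≤ ‖v‖ := fun i => by simpa using PiLp.norm_apply_le v i
  have h2 := hc 2
  have h3 := hc 3
  have h4 := hc 4
  refine ⟨?_, by linarith, by linarith, by linarith, ?_⟩
  · nlinarith [sq_nonneg (v 2), sq_nonneg (v 3), sq_nonneg (v 4)]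
  · linarith [abs_sub (v 2) (v 3)]

lemma norm_le_of_inBall {v : EuclideanSpace ℝ (Fin 5)} {t : ℝ} (ht : 0 ≤ t)
    (h : InBall v.ofLp t) : ‖v‖ ≤ 2 * t := by
  obtain ⟨h0, h2, h3, h4, -⟩ := h
  have hs := EuclideanSpace.real_norm_sq_eq v
  rw [Fin.sum_univ_five] at hs
  have e2 := sq_le_sq' (abs_le.1 h2).1 (abs_le.1 h2).2
  have e3 := sq_le_sq' (abs_le.1 h3).1 (abs_le.1 h3).2
  have e4 := sq_le_sq' (abs_le.1 h4).1 (abs_le.1 h4).2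
  exact le_of_sq_le_sq (by nlinarith) (by linarith)

lemma opNorm_prod_le (l : List (Fin 4)) :
    opNorm (l.map Imat).prod ≤ 40 * (19 / 20) ^ l.length := by
  refine ContinuousLinearMap.opNorm_le_bound _ (by positivity) fun v => ?_
  have h := inBall_prod_mulVec l (by positivity) (inBall_of_norm v)
  have := norm_le_of_inBall
    (v := LinearMap.toContinuousLinearMap (Matrix.toEuclideanLin (l.map Imat).prod) v)
    (by positivity) h
  linarith

/-- The operator norms of products I_{x₁}·I_{x₂}⋯I_{x_n} tend to zero uniformly
in the length of the product. -/
theorem statement8 : ∀ ε : ℝ, 0 < ε → ∃ n₀ : ℕ, ∀ n : ℕ, n₀ ≤ n →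
    ∀ x : Fin n → Fin 4, opNorm ((List.ofFn fun k => Imat (x k)).prod) < ε := by
  intro ε hε
  obtain ⟨n₀, hn₀⟩ := exists_pow_lt_of_lt_one (show 0 < ε / 40 by positivity)
    (show (19 / 20 : ℝ) < 1 by norm_num)
  refine ⟨n₀, fun n hn x => ?_⟩
  have h := opNorm_prod_le (List.ofFn x)
  rw [List.map_ofFn, List.length_ofFn] at h
  have hp : (19 / 20 : ℝ) ^ n ≤ (19 / 20) ^ n₀ :=
    pow_le_pow_of_le_one (by norm_num) (by norm_num) hn
  refine lt_of_le_of_lt h ?_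
  linarith
end

section
/- For all real numbers x, y, z ≥ 0, the sum of the three coordinates of F₁(F₁(x,y,z)) is at most (x+y+z)/2. (Equivalently: two applications of the folding transformation F₁ reduce the mass of a tripod at least by half, so the normalized second iterate is uniformly expanding by a factor of at least 2.) -/
/-- The folding transformation F₁(x, y, z) = (|x − z|/2, min(x, z), y). -/
noncomputable def F1 : ℝ × ℝ × ℝ → ℝ × ℝ × ℝ :=
  fun p => (|p.1 - p.2.2| / 2, min p.1 p.2.2, p.2.1)

/-- Two applications of F₁ reduce the mass (sum of the coordinates) at least
by half. -/
theorem statement9 (x y z : ℝ) (hx : 0 ≤ x) (hy : 0 ≤ y) (hz : 0 ≤ z) :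
    (F1 (F1 (x, y, z))).1 + (F1 (F1 (x, y, z))).2.1 + (F1 (F1 (x, y, z))).2.2 ≤
      (x + y + z) / 2 := by
  -- `|u - v| / 2 + min u v = (u + v) / 2`, so the mass after two steps is
  -- `|x - z| / 4 + min x z + y / 2`, while `(x + z) / 2 = |x - z| / 2 + min x z`.
  have key (u v : ℝ) : |u - v| / 2 + min u v = (u + v) / 2 := by
    rcases le_total u v with h | h
    · rw [min_eq_left h, abs_of_nonpos (sub_nonpos.mpr h)]
      ring
    · rw [min_eq_right h, abs_of_nonneg (sub_nonneg.mpr h)]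
      ring
  have h₁ := key x z
  have h₂ := key (|x - z| / 2) y
  have h₃ := abs_nonneg (x - z)
  simp only [F1]
  linarith
end

section
/- For every point (x,y,z) of the simplex Δ and for i = 1, 2: the point Φ̃_i(x,y,z) belongs to Δ, and F̃(Φ̃_i(x,y,z)) = (x,y,z). (Thus Φ̃₁ and Φ̃₂ are branches of the inverse of F̃ : Δ → Δ.) -/
/-!
With `s = 1 + x + y`, the relation `x + y + z = 1` gives `1 + z/s = 2/s`, the denominator of `Ftil`
at both preimages. Since `y/s ≤ (2x+y)/s`, the outer coordinates of either preimage have minimum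
`y/s` and distance `2x/s`, so dividing by `2/s` recovers `(x, y, z)`. The two branches differ
by swapping the outer coordinates, under which `Ftil` is invariant.
-/

/-- The simplex Δ = {(x,y,z) : x,y,z ≥ 0, x+y+z = 1}. -/
def Delta : Set (ℝ × ℝ × ℝ) :=
  {p | 0 ≤ p.1 ∧ 0 ≤ p.2.1 ∧ 0 ≤ p.2.2 ∧ p.1 + p.2.1 + p.2.2 = 1}

/-- F̃(x,y,z) = (|x−z|/(1+y), 2·min(x,z)/(1+y), 2y/(1+y)). -/
noncomputable def Ftil : ℝ × ℝ × ℝ → ℝ × ℝ × ℝ :=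
  fun p => (|p.1 - p.2.2| / (1 + p.2.1), 2 * min p.1 p.2.2 / (1 + p.2.1),
    2 * p.2.1 / (1 + p.2.1))

/-- Φ̃₁(x,y,z) = (y/(1+x+y), z/(1+x+y), (2x+y)/(1+x+y)). -/
noncomputable def Phi1 : ℝ × ℝ × ℝ → ℝ × ℝ × ℝ :=
  fun p => (p.2.1 / (1 + p.1 + p.2.1), p.2.2 / (1 + p.1 + p.2.1),
    (2 * p.1 + p.2.1) / (1 + p.1 + p.2.1))

/-- Φ̃₂(x,y,z) = ((2x+y)/(1+x+y), z/(1+x+y), y/(1+x+y)). -/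
noncomputable def Phi2 : ℝ × ℝ × ℝ → ℝ × ℝ × ℝ :=
  fun p => ((2 * p.1 + p.2.1) / (1 + p.1 + p.2.1), p.2.2 / (1 + p.1 + p.2.1),
    p.2.1 / (1 + p.1 + p.2.1))

/-- Φ̃₁ and Φ̃₂ map Δ into Δ and are branches of the inverse of F̃ : Δ → Δ. -/
theorem statement10 :
    ∀ p ∈ Delta,
      (Phi1 p ∈ Delta ∧ Ftil (Phi1 p) = p) ∧ (Phi2 p ∈ Delta ∧ Ftil (Phi2 p) = p) := by
  rintro ⟨x, y, z⟩ ⟨hx, hy, hz, hsum⟩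
  dsimp only at hx hy hz hsum
  have hs : 0 < 1 + x + y := by positivity
  have hle : y / (1 + x + y) ≤ (2 * x + y) / (1 + x + y) := by gcongr; linarith
  have hdiff : (2 * x + y) / (1 + x + y) - y / (1 + x + y) = 2 * x / (1 + x + y) := by ring
  have hden : 1 + z / (1 + x + y) = 2 / (1 + x + y) := by
    field_simp
    linarith
  have hx2 : 0 ≤ 2 * x / (1 + x + y) := by positivity
  have hmem : y / (1 + x + y) + z / (1 + x + y) + (2 * x + y) / (1 + x + y) = 1 := by
    field_simp
    linarith
  -- Both branches use `2a/s / (2/s) = a` with `s = 1 + x + y`.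
  have hcancel : ∀ a : ℝ, 2 * (a / (1 + x + y)) / (2 / (1 + x + y)) = a := by
    intro a
    field_simp
  have hfst : 2 * x / (1 + x + y) / (2 / (1 + x + y)) = x := by
    rw [mul_div_assoc, hcancel]
  refine ⟨⟨⟨?_, ?_, ?_, ?_⟩, ?_⟩, ⟨?_, ?_, ?_, ?_⟩, ?_⟩
  · dsimp only [Phi1]; positivity
  · dsimp only [Phi1]; positivity
  · dsimp only [Phi1]; positivity
  · exact hmem
  · simp only [Ftil, Phi1]
    rw [abs_sub_comm, hdiff, abs_of_nonneg hx2, min_eq_left hle, hden, hfst, hcancel, hcancel]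
  · dsimp only [Phi2]; positivity
  · dsimp only [Phi2]; positivity
  · dsimp only [Phi2]; positivity
  · dsimp only [Phi2]; linarith
  · simp only [Ftil, Phi2]
    rw [hdiff, abs_of_nonneg hx2, min_eq_right hle, hden, hfst, hcancel, hcancel]
end

section
/- The maps F and F̃, regarded as self-maps of the simplex Δ, are topologically conjugate: there exists a homeomorphism ψ : Δ → Δ such that ψ ∘ F = F̃ ∘ ψ on Δ. -/
/-- F(x,y,z) = (|x−z|, 2·min(x,z), y). -/
noncomputable def Fmap : ℝ × ℝ × ℝ → ℝ × ℝ × ℝ :=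
  fun p => (|p.1 - p.2.2|, 2 * min p.1 p.2.2, p.2.1)

/-! ### Abstract fold systems and their conjugacies -/

/-- `IsWord g n h`: the map `h` is a composition of `n` of the maps `g true`, `g false`. -/
inductive IsWord {X : Type*} (g : Bool → X → X) : ℕ → (X → X) → Prop
  | nil : IsWord g 0 id
  | snoc {n : ℕ} {h : X → X} (i : Bool) : IsWord g n h → IsWord g (n + 1) (h ∘ g i)

/-- A two-to-one folding map `f` of a triangle `X` with halves `H true`, `H false` and edges
`Ex`, `Ey`, `Ez`. The maps `g i` are the inverse branches of `f`; the fields from `glue` on record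
how `f` and the branches act on the fold and on the edges, and `shrink` says that the images of words
of length `n` have diameters tending to `0`. -/
structure FoldSystem {X : Type*} [MetricSpace X] (H : Bool → Set X) (Ex Ey Ez : Set X) where
  f : X → X
  g : Bool → X → X
  f_cont : Continuous f
  g_cont : ∀ i, Continuous (g i)
  f_g : ∀ i p, f (g i p) = p
  g_f : ∀ i, ∀ p ∈ H i, g i (f p) = p
  g_mem : ∀ i p, g i p ∈ H i
  glue : ∀ p ∈ Ex, g true p = g false p
  fold : ∀ p ∈ H true, p ∈ H false → f p ∈ Ex
  f_Ex : ∀ p ∈ Ex, p ∈ H false ∧ f p ∈ Ey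
  f_Ey : ∀ p ∈ Ey, f p ∈ Ez
  f_Ez : ∀ p ∈ Ez, p ∈ H true ∧ f p ∈ Ey
  g_Ex : ∀ p ∈ Ey, g false p ∈ Ex
  g_Ey : ∀ i, ∀ p ∈ Ez, g i p ∈ Ey
  g_Ez : ∀ p ∈ Ey, g true p ∈ Ez
  shrink : ∃ d : ℕ → ℝ, Filter.Tendsto d Filter.atTop (nhds 0) ∧
    ∀ n h, IsWord g n h → ∀ p q, dist (h p) (h q) ≤ d n

/-- Continuous self-maps sending each of the three edges into itself. -/
structure EdgeMap {X : Type*} [MetricSpace X] (Ex Ey Ez : Set X) (φ : X → X) : Prop where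
  cont : Continuous φ
  mem_x : ∀ p ∈ Ex, φ p ∈ Ex
  mem_y : ∀ p ∈ Ey, φ p ∈ Ey
  mem_z : ∀ p ∈ Ez, φ p ∈ Ez

namespace FoldSystem

variable {X : Type*} [MetricSpace X] {H : Bool → Set X} {Ex Ey Ez : Set X}

open Classical in
/-- The operator whose fixed points are the conjugacies from `S` to `S'`. On the fold, where both
branches are available, the branch `true` is used. -/
noncomputable def transfer (S S' : FoldSystem H Ex Ey Ez) (φ : X → X) (p : X) : X :=
  if p ∈ H true then S'.g true (φ (S.f p)) else S'.g false (φ (S.f p))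

/-- For a map preserving the edge `Ex`, the branch chosen on the fold does not matter. -/
theorem transfer_eq (S S' : FoldSystem H Ex Ey Ez) {φ : X → X} (hφ : ∀ p ∈ Ex, φ p ∈ Ex)
    (i : Bool) (p : X) (hp : p ∈ H i) : S.transfer S' φ p = S'.g i (φ (S.f p)) := by
  unfold transfer
  cases i with
  | true => rw [if_pos hp]
  | false =>
    split_ifs with h
    · exact S'.glue _ (hφ _ (S.fold p h hp))
    · rfl

theorem _root_.EdgeMap.transfer (hcl : ∀ i, IsClosed (H i)) (hcov : ∀ p, ∃ i, p ∈ H i)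
    (S S' : FoldSystem H Ex Ey Ez) {φ : X → X} (hφ : EdgeMap Ex Ey Ez φ) :
    EdgeMap Ex Ey Ez (S.transfer S' φ) := by
  have key := S.transfer_eq S' hφ.mem_x
  refine ⟨?_, ?_, ?_, ?_⟩
  · have hc : ∀ i, ContinuousOn (S.transfer S' φ) (H i) := fun i =>
      (((S'.g_cont i).comp (hφ.cont.comp S.f_cont)).continuousOn).congr (fun p hp => key i p hp)
    have := (hc true).union_of_isClosed (hc false) (hcl true) (hcl false)
    rw [← continuousOn_univ]
    refine this.mono fun p _ => ?_
    obtain ⟨i, hi⟩ := hcov p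
    cases i
    · exact Or.inr hi
    · exact Or.inl hi
  · intro p hp
    rw [key false p (S.f_Ex p hp).1]
    exact S'.g_Ex _ (hφ.mem_y _ (S.f_Ex p hp).2)
  · intro p hp
    obtain ⟨i, hi⟩ := hcov p
    rw [key i p hi]
    exact S'.g_Ey i _ (hφ.mem_z _ (S.f_Ey p hp))
  · intro p hp
    rw [key true p (S.f_Ez p hp).1]
    exact S'.g_Ez _ (hφ.mem_y _ (S.f_Ez p hp).2)

/-- The word `h` depends on `p` and `n` only, not on `φ`: it spells the itinerary of `p`. -/
theorem iterate_transfer (S S' : FoldSystem H Ex Ey Ez) (n : ℕ) (p : X) :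
    ∃ h, IsWord S'.g n h ∧ ∀ φ, (S.transfer S')^[n] φ p = h (φ (S.f^[n] p)) := by
  induction n with
  | zero => exact ⟨id, IsWord.nil, fun φ => rfl⟩
  | succ n ih =>
    obtain ⟨h, hw, hh⟩ := ih
    by_cases hp : S.f^[n] p ∈ H true
    · refine ⟨_, hw.snoc true, fun φ => ?_⟩
      rw [Function.iterate_succ_apply, hh, Function.iterate_succ_apply']
      simp [transfer, hp]
    · refine ⟨_, hw.snoc false, fun φ => ?_⟩
      rw [Function.iterate_succ_apply, hh, Function.iterate_succ_apply']
      simp [transfer, hp]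

theorem exists_semiconj [CompleteSpace X] (hcl : ∀ i, IsClosed (H i))
    (hcov : ∀ p, ∃ i, p ∈ H i) (S S' : FoldSystem H Ex Ey Ez) :
    ∃ ψ : X → X, Continuous ψ ∧ ∀ i, ∀ p ∈ H i, ψ p = S'.g i (ψ (S.f p)) := by
  obtain ⟨d, hd, hsh⟩ := S'.shrink
  set u : ℕ → X → X := fun n => (S.transfer S')^[n] id with hu
  have hedge : ∀ n, EdgeMap Ex Ey Ez (u n) := by
    intro n
    induction n with
    | zero => exact ⟨continuous_id, fun _ h => h, fun _ h => h, fun _ h => h⟩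
    | succ n ih =>
      simp only [hu, Function.iterate_succ_apply'] at ih ⊢
      exact ih.transfer hcl hcov S S'
  have hdist : ∀ n k p, dist (u n p) (u (n + k) p) ≤ d n := by
    intro n k p
    obtain ⟨h, hw, hh⟩ := S.iterate_transfer S' n p
    simp only [hu, Function.iterate_add_apply, hh]
    exact hsh n h hw _ _
  have hcauchy : ∀ p, CauchySeq fun n => u n p := by
    intro p
    refine cauchySeq_of_le_tendsto_0' d (fun n m hnm => ?_) hd
    obtain ⟨k, rfl⟩ := Nat.exists_eq_add_of_le hnm
    exact hdist n k p
  choose ψ hψ using fun p => cauchySeq_tendsto_of_complete (hcauchy p)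
  have hlim : ∀ n p, dist (u n p) (ψ p) ≤ d n := by
    intro n p
    refine le_of_tendsto (tendsto_const_nhds.dist (hψ p)) ?_
    filter_upwards [Filter.eventually_ge_atTop n] with m hm
    obtain ⟨k, rfl⟩ := Nat.exists_eq_add_of_le hm
    exact hdist n k p
  have hunif : TendstoUniformly u ψ Filter.atTop := by
    rw [Metric.tendstoUniformly_iff]
    intro ε hε
    filter_upwards [hd.eventually_lt_const hε] with n hn p
    rw [dist_comm]
    exact (hlim n p).trans_lt hn
  refine ⟨ψ, hunif.continuous (Filter.Frequently.of_forall fun n => (hedge n).cont), ?_⟩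
  intro i p hp
  have h1 : Filter.Tendsto (fun n => u (n + 1) p) Filter.atTop (nhds (ψ p)) :=
    (hψ p).comp (Filter.tendsto_add_atTop_nat 1)
  have h2 : Filter.Tendsto (fun n => S'.g i (u n (S.f p))) Filter.atTop
      (nhds (S'.g i (ψ (S.f p)))) := ((S'.g_cont i).tendsto _).comp (hψ (S.f p))
  refine tendsto_nhds_unique h1 (h2.congr fun n => ?_)
  simp only [hu, Function.iterate_succ_apply']
  exact (S.transfer_eq S' (hedge n).mem_x i p hp).symm

theorem eq_id (hcov : ∀ p, ∃ i, p ∈ H i) (S : FoldSystem H Ex Ey Ez) (χ : X → X)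
    (hχ : ∀ i, ∀ p ∈ H i, χ p = S.g i (χ (S.f p))) (p : X) : χ p = p := by
  obtain ⟨d, hd, hsh⟩ := S.shrink
  have key : ∀ n, ∃ h, IsWord S.g n h ∧ χ p = h (χ (S.f^[n] p)) ∧ p = h (S.f^[n] p) := by
    intro n
    induction n with
    | zero => exact ⟨id, IsWord.nil, rfl, rfl⟩
    | succ n ih =>
      obtain ⟨h, hw, h1, h2⟩ := ih
      obtain ⟨i, hi⟩ := hcov (S.f^[n] p)
      refine ⟨_, hw.snoc i, ?_, ?_⟩
      · rw [Function.iterate_succ_apply', Function.comp_apply, ← hχ i _ hi]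
        exact h1
      · rw [Function.iterate_succ_apply', Function.comp_apply, S.g_f i _ hi]
        exact h2
  have hle : dist (χ p) p ≤ 0 := by
    refine ge_of_tendsto' hd fun n => ?_
    obtain ⟨h, hw, h1, h2⟩ := key n
    calc dist (χ p) p = dist (h (χ (S.f^[n] p))) (h (S.f^[n] p)) := by rw [← h1, ← h2]
      _ ≤ d n := hsh n h hw _ _
  exact dist_le_zero.mp hle

theorem exists_conj [CompleteSpace X] (hcl : ∀ i, IsClosed (H i))
    (hcov : ∀ p, ∃ i, p ∈ H i) (S S' : FoldSystem H Ex Ey Ez) :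
    ∃ ψ : X ≃ₜ X, ∀ p, ψ (S.f p) = S'.f (ψ p) := by
  obtain ⟨ψ, hψc, hψ⟩ := exists_semiconj hcl hcov S S'
  obtain ⟨φ, hφc, hφ⟩ := exists_semiconj hcl hcov S' S
  have h1 : ∀ p, φ (ψ p) = p := S.eq_id hcov (fun p => φ (ψ p)) fun i p hp => by
    rw [hψ i p hp, hφ i _ (S'.g_mem i _), S'.f_g]
  have h2 : ∀ p, ψ (φ p) = p := S'.eq_id hcov (fun p => ψ (φ p)) fun i p hp => by
    rw [hφ i p hp, hψ i _ (S.g_mem i _), S.f_g]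
  refine ⟨⟨⟨ψ, φ, h1, h2⟩, hψc, hφc⟩, fun p => ?_⟩
  obtain ⟨i, hi⟩ := hcov p
  change ψ (S.f p) = S'.f (ψ p)
  rw [hψ i p hi, S'.f_g]

end FoldSystem

/-! ### The family of fold maps of the simplex -/

/-- The normalisation of `(τ|x-z|, 2τ min(x,z), 2y)`; `τ = 2` gives `F` and `τ = 1` gives `F̃`. -/
noncomputable def foldMap (τ : ℝ) (p : ℝ × ℝ × ℝ) : ℝ × ℝ × ℝ :=
  (τ * |p.1 - p.2.2| / (τ * (p.1 + p.2.2) + 2 * p.2.1),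
    2 * τ * min p.1 p.2.2 / (τ * (p.1 + p.2.2) + 2 * p.2.1),
    2 * p.2.1 / (τ * (p.1 + p.2.2) + 2 * p.2.1))

/-- The inverse branches of `foldMap τ`: `true` maps onto the half `z ≤ x`, `false` onto `x ≤ z`. -/
noncomputable def branch (τ : ℝ) (i : Bool) (p : ℝ × ℝ × ℝ) : ℝ × ℝ × ℝ :=
  (cond i (2 * p.1 + p.2.1) p.2.1 / (2 * p.1 + 2 * p.2.1 + τ * p.2.2),
    τ * p.2.2 / (2 * p.1 + 2 * p.2.1 + τ * p.2.2),
    cond i p.2.1 (2 * p.1 + p.2.1) / (2 * p.1 + 2 * p.2.1 + τ * p.2.2))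

theorem fold_den_pos {τ : ℝ} (hτ : 0 < τ) {p : ℝ × ℝ × ℝ} (hp : p ∈ Delta) :
    0 < τ * (p.1 + p.2.2) + 2 * p.2.1 := by
  obtain ⟨hx, hy, hz, hs⟩ := hp
  rcases hy.eq_or_lt with h | h
  · have : p.1 + p.2.2 = 1 := by linarith
    rw [this]; linarith
  · have : 0 ≤ τ * (p.1 + p.2.2) := by positivity
    linarith

theorem branch_den_pos {τ : ℝ} (hτ : 0 < τ) {p : ℝ × ℝ × ℝ} (hp : p ∈ Delta) :
    0 < 2 * p.1 + 2 * p.2.1 + τ * p.2.2 := by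
  obtain ⟨hx, hy, hz, hs⟩ := hp
  rcases hz.eq_or_lt with h | h
  · rw [← h]; linarith
  · have : 0 < τ * p.2.2 := by positivity
    linarith

theorem abs_sub_add_two_min (x z : ℝ) : |x - z| + 2 * min x z = x + z := by
  rcases le_total x z with h | h
  · rw [min_eq_left h, abs_of_nonpos (by linarith)]; ring
  · rw [min_eq_right h, abs_of_nonneg (by linarith)]; ring

theorem foldMap_mem {τ : ℝ} (hτ : 0 < τ) {p : ℝ × ℝ × ℝ} (hp : p ∈ Delta) :
    foldMap τ p ∈ Delta := by
  have hN := fold_den_pos hτ hp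
  obtain ⟨hx, hy, hz, hs⟩ := hp
  have hm : 0 ≤ min p.1 p.2.2 := le_min hx hz
  refine ⟨?_, ?_, ?_, ?_⟩ <;> simp only [foldMap]
  · positivity
  · positivity
  · positivity
  · rw [← add_div, ← add_div, div_eq_one_iff_eq hN.ne', ← abs_sub_add_two_min p.1 p.2.2]
    ring

theorem branch_mem {τ : ℝ} (hτ : 0 < τ) (i : Bool) {p : ℝ × ℝ × ℝ} (hp : p ∈ Delta) :
    branch τ i p ∈ Delta := by
  have hN := branch_den_pos hτ hp
  obtain ⟨hx, hy, hz, hs⟩ := hp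
  cases i <;> refine ⟨?_, ?_, ?_, ?_⟩ <;> simp only [branch, cond_true, cond_false]
  any_goals positivity
  all_goals
    rw [← add_div, ← add_div, div_eq_one_iff_eq hN.ne']
    ring

/-- The half `z ≤ x` for `true` and the half `x ≤ z` for `false`. -/
def half (i : Bool) : Set Delta :=
  {p | cond i (p.1.2.2 ≤ p.1.1) (p.1.1 ≤ p.1.2.2)}

theorem half_closed (i : Bool) : IsClosed (half i) := by
  cases i <;> simp only [half, cond_true, cond_false] <;>
    exact isClosed_le (by fun_prop) (by fun_prop)

theorem half_cover (p : Delta) : ∃ i, p ∈ half i := by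
  rcases le_total p.1.1 p.1.2.2 with h | h
  · exact ⟨false, h⟩
  · exact ⟨true, h⟩

/-- `foldMap τ` as a self-map of the simplex. -/
noncomputable def foldD {τ : ℝ} (hτ : 0 < τ) (p : Delta) : Delta :=
  ⟨foldMap τ p, foldMap_mem hτ p.2⟩

/-- `branch τ i` as a self-map of the simplex. -/
noncomputable def branchD {τ : ℝ} (hτ : 0 < τ) (i : Bool) (p : Delta) : Delta :=
  ⟨branch τ i p, branch_mem hτ i p.2⟩

theorem foldD_continuous {τ : ℝ} (hτ : 0 < τ) : Continuous (foldD hτ) := by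
  refine Continuous.subtype_mk ?_ _
  have h : ∀ p : Delta, τ * (p.1.1 + p.1.2.2) + 2 * p.1.2.1 ≠ 0 :=
    fun p => (fold_den_pos hτ p.2).ne'
  unfold foldMap
  refine Continuous.prodMk ?_ (Continuous.prodMk ?_ ?_) <;>
    exact Continuous.div (by fun_prop) (by fun_prop) h

theorem branchD_continuous {τ : ℝ} (hτ : 0 < τ) (i : Bool) : Continuous (branchD hτ i) := by
  refine Continuous.subtype_mk ?_ _
  have h : ∀ p : Delta, 2 * p.1.1 + 2 * p.1.2.1 + τ * p.1.2.2 ≠ 0 :=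
    fun p => (branch_den_pos hτ p.2).ne'
  unfold branch
  cases i <;> simp only [cond_true, cond_false] <;>
    refine Continuous.prodMk ?_ (Continuous.prodMk ?_ ?_) <;>
    exact Continuous.div (by fun_prop) (by fun_prop) h

theorem branchD_mem_half {τ : ℝ} (hτ : 0 < τ) (i : Bool) (p : Delta) : branchD hτ i p ∈ half i := by
  have hN := branch_den_pos hτ p.2
  have hx := p.2.1
  cases i <;> simp only [half, branchD, branch, cond_true, cond_false, Set.mem_ofPred_eq] <;>
    gcongr <;> linarith

theorem foldD_branchD {τ : ℝ} (hτ : 0 < τ) (i : Bool) (p : Delta) :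
    foldD hτ (branchD hτ i p) = p := by
  have hN := branch_den_pos hτ p.2
  have hhalf := branchD_mem_half hτ i p
  obtain ⟨⟨x, y, z⟩, hx, hy, hz, hs⟩ := p
  simp only at hx hy hz hs hN
  set N := 2 * x + 2 * y + τ * z with hNdef
  apply Subtype.ext
  cases i
  · have h : y / N ≤ (2 * x + y) / N := hhalf
    have e : τ * (y / N + (2 * x + y) / N) + 2 * (τ * z / N) = 2 * τ / N := by
      rw [← mul_one (2 * τ), ← hs]; ring
    simp only [foldD, foldMap, branchD, branch, cond_false, ← hNdef, e]
    rw [min_eq_left h, abs_of_nonpos (by linarith)]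
    ext <;> simp only <;> field_simp <;> ring
  · have h : y / N ≤ (2 * x + y) / N := hhalf
    have e : τ * ((2 * x + y) / N + y / N) + 2 * (τ * z / N) = 2 * τ / N := by
      rw [← mul_one (2 * τ), ← hs]; ring
    simp only [foldD, foldMap, branchD, branch, cond_true, ← hNdef, e]
    rw [min_eq_right h, abs_of_nonneg (by linarith)]
    ext <;> simp only <;> field_simp <;> ring

theorem branchD_foldD {τ : ℝ} (hτ : 0 < τ) (i : Bool) (p : Delta) (hp : p ∈ half i) :
    branchD hτ i (foldD hτ p) = p := by
  have hN := fold_den_pos hτ p.2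
  obtain ⟨⟨x, y, z⟩, hx, hy, hz, hs⟩ := p
  simp only at hx hy hz hs hN
  set N := τ * (x + z) + 2 * y with hNdef
  apply Subtype.ext
  cases i
  · have h : x ≤ z := hp
    have e : 2 * (τ * -(x - z) / N) + 2 * (2 * τ * x / N) + τ * (2 * y / N) = 2 * τ / N :=
      calc _ = 2 * τ * (x + y + z) / N := by ring
        _ = _ := by rw [hs, mul_one]
    simp only [foldD, foldMap, branchD, branch, cond_false, ← hNdef]
    rw [min_eq_left h, abs_of_nonpos (by linarith), e]
    ext <;> simp only <;> field_simp <;> ring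
  · have h : z ≤ x := hp
    have e : 2 * (τ * (x - z) / N) + 2 * (2 * τ * z / N) + τ * (2 * y / N) = 2 * τ / N :=
      calc _ = 2 * τ * (x + y + z) / N := by ring
        _ = _ := by rw [hs, mul_one]
    simp only [foldD, foldMap, branchD, branch, cond_true, ← hNdef]
    rw [min_eq_right h, abs_of_nonneg (by linarith), e]
    ext <;> simp only <;> field_simp <;> ring

/-! ### Shrinking of the subdivision triangles -/

/-- The cone of vertex weights occurring in the subdivisions for `τ = 1` and `τ = 2`. -/
structure WeightCone (τ a b c : ℝ) : Prop where
  pos : 0 < c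
  ca : c ≤ a
  cb : c ≤ b
  bc : b ≤ 2 * c
  ac : a + c ≤ 2 * b
  ab : 2 * a ≤ 3 * b
  par : τ = 1 ∨ τ = 2 ∧ a = b ∧ b = c

theorem WeightCone.step_true {τ a b c : ℝ} (h : WeightCone τ a b c) :
    WeightCone τ (2 * a) (a + c) (τ * b) := by
  obtain ⟨h1, h2, h3, h4, h5, h6, h7⟩ := h
  rcases h7 with rfl | ⟨rfl, rfl, rfl⟩
  · exact ⟨by linarith, by linarith, by linarith, by linarith, by linarith, by linarith, Or.inl rfl⟩
  · exact ⟨by linarith, by linarith, by linarith, by linarith, by linarith, by linarith,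
      Or.inr ⟨rfl, by ring, by ring⟩⟩

theorem WeightCone.step_false {τ a b c : ℝ} (h : WeightCone τ a b c) :
    WeightCone τ (2 * c) (a + c) (τ * b) := by
  obtain ⟨h1, h2, h3, h4, h5, h6, h7⟩ := h
  rcases h7 with rfl | ⟨rfl, rfl, rfl⟩
  · exact ⟨by linarith, by linarith, by linarith, by linarith, by linarith, by linarith, Or.inl rfl⟩
  · exact ⟨by linarith, by linarith, by linarith, by linarith, by linarith, by linarith,
      Or.inr ⟨rfl, by ring, by ring⟩⟩

/-- Lengths after splitting the edge `AC` at `M = sA + tC`, with `s, t` bounded away from `0`. The factors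
`1, 25/32, 24/25` for the edges `AC, AB, BC` are chosen so that one step gains `24/25` on all of them. -/
theorem split_edges {E : Type*} [NormedAddCommGroup E] [NormedSpace ℝ E] {A B C M : E} {s t r : ℝ}
    (hr : 0 ≤ r) (hs : 1 / 4 ≤ s) (ht : 1 / 4 ≤ t) (hst : s + t = 1) (hM : M = s • A + t • C)
    (hAC : ‖A - C‖ ≤ r) (hAB : ‖A - B‖ ≤ 25 / 32 * r) (hBC : ‖B - C‖ ≤ 24 / 25 * r) :
    ‖A - M‖ ≤ 25 / 32 * (24 / 25 * r) ∧ ‖C - M‖ ≤ 25 / 32 * (24 / 25 * r) ∧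
      ‖M - B‖ ≤ 24 / 25 * (24 / 25 * r) := by
  obtain rfl : s = 1 - t := by linarith
  subst hM
  have e1 : A - ((1 - t) • A + t • C) = t • (A - C) := by module
  have e2 : C - ((1 - t) • A + t • C) = (-(1 - t)) • (A - C) := by module
  have e3 : ((1 - t) • A + t • C) - B = (1 - t) • (A - B) + (-t) • (B - C) := by module
  refine ⟨?_, ?_, ?_⟩
  · rw [e1, norm_smul, Real.norm_of_nonneg (by linarith)]
    nlinarith [norm_nonneg (A - C)]
  · rw [e2, norm_smul, norm_neg, Real.norm_of_nonneg (by linarith)]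
    nlinarith [norm_nonneg (A - C)]
  · rw [e3]
    refine (norm_add_le _ _).trans ?_
    rw [norm_smul, norm_smul, norm_neg, Real.norm_of_nonneg (by linarith : 0 ≤ 1 - t),
      Real.norm_of_nonneg (by linarith : 0 ≤ t)]
    have h1 : (1 - t) * ‖A - B‖ ≤ (1 - t) * (25 / 32 * r) := by gcongr
    have h2 : t * ‖B - C‖ ≤ t * (24 / 25 * r) := by gcongr
    nlinarith

theorem clear_den {E : Type*} [AddCommGroup E] [Module ℝ E] {x y z N a b c : ℝ} {v A B C : E}
    (hN : N ≠ 0) (h : (x / N * a + y / N * b + z / N * c) • v =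
      (x / N * a) • A + (y / N * b) • B + (z / N * c) • C) :
    (x * a + y * b + z * c) • v = (x * a) • A + (y * b) • B + (z * c) • C := by
  have e : ∀ t s : ℝ, t * s = N * (t / N * s) := fun t s => by field_simp
  rw [e x, e y, e z, ← mul_add, ← mul_add, mul_smul, h]
  module

/-- A word of length `n` is a projective map onto a triangle `ABC` with weights in the cone and edge lengths
of order `(24/25)^n`. The projective formula is stated with the denominator cleared. -/
theorem word_vertices {τ : ℝ} (hτ : 0 < τ) (hτ' : τ = 1 ∨ τ = 2) {n : ℕ} {h : Delta → Delta}
    (hw : IsWord (branchD hτ) n h) :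
    ∃ (a b c : ℝ) (A B C : ℝ × ℝ × ℝ), WeightCone τ a b c ∧
      ‖A - C‖ ≤ 2 * (24 / 25) ^ n ∧ ‖A - B‖ ≤ 25 / 32 * (2 * (24 / 25) ^ n) ∧
      ‖B - C‖ ≤ 24 / 25 * (2 * (24 / 25) ^ n) ∧
      ∀ p : Delta, (p.1.1 * a + p.1.2.1 * b + p.1.2.2 * c) • (h p : ℝ × ℝ × ℝ) =
        (p.1.1 * a) • A + (p.1.2.1 * b) • B + (p.1.2.2 * c) • C := by
  induction hw with
  | nil =>
    refine ⟨1, 1, 1, (1, 0, 0), (0, 1, 0), (0, 0, 1), ?_, ?_, ?_, ?_, ?_⟩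
    · refine ⟨by norm_num, by norm_num, by norm_num, by norm_num, by norm_num, by norm_num, ?_⟩
      simpa using hτ'
    · norm_num [Prod.norm_def]
    · norm_num [Prod.norm_def]
    · norm_num [Prod.norm_def]
    · intro p
      have hs := p.2.2.2.2
      ext <;> simp [hs]
  | @snoc n h i hw ih =>
    obtain ⟨a, b, c, A, B, C, hW, hAC, hAB, hBC, hQ⟩ := ih
    have h0 := hW.pos
    have h1 := hW.ca
    have h2 : a ≤ 3 * c := by linarith [hW.ab, hW.bc]
    have hac : 0 < a + c := by linarith
    have hs : 1 / 4 ≤ a / (a + c) := by rw [div_le_div_iff₀ (by norm_num) hac]; linarith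
    have ht : 1 / 4 ≤ c / (a + c) := by rw [div_le_div_iff₀ (by norm_num) hac]; linarith
    have hst : a / (a + c) + c / (a + c) = 1 := by rw [← add_div, div_self hac.ne']
    set r : ℝ := 2 * (24 / 25) ^ n with hr
    have hr0 : 0 ≤ r := by positivity
    have hr' : 2 * (24 / 25 : ℝ) ^ (n + 1) = 24 / 25 * r := by rw [hr]; ring
    set M := (a / (a + c)) • A + (c / (a + c)) • C with hM
    have hMac : (a + c) • M = a • A + c • C := by
      rw [hM, smul_add, smul_smul, smul_smul, mul_div_cancel₀ _ hac.ne',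
        mul_div_cancel₀ _ hac.ne']
    obtain ⟨hAM, hCM, hMB⟩ := split_edges hr0 hs ht hst hM hAC hAB hBC
    rw [hr']
    cases i with
    | true =>
      refine ⟨2 * a, a + c, τ * b, A, M, B, hW.step_true, by linarith, hAM, hMB, fun p => ?_⟩
      have key := clear_den (x := (2 * p.1.1 + p.1.2.1)) (y := τ * p.1.2.2) (z := p.1.2.1)
        (branch_den_pos hτ p.2).ne' (hQ (branchD hτ true p))
      have e : p.1.1 * (2 * a) + p.1.2.1 * (a + c) + p.1.2.2 * (τ * b) =
          (2 * p.1.1 + p.1.2.1) * a + τ * p.1.2.2 * b + p.1.2.1 * c := by ring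
      rw [mul_smul p.1.2.1, hMac, e, Function.comp_apply, key]
      module
    | false =>
      refine ⟨2 * c, a + c, τ * b, C, M, B, hW.step_false, ?_, hCM, hMB, fun p => ?_⟩
      · rw [norm_sub_rev]; exact hBC
      have key := clear_den (x := p.1.2.1) (y := τ * p.1.2.2) (z := (2 * p.1.1 + p.1.2.1))
        (branch_den_pos hτ p.2).ne' (hQ (branchD hτ false p))
      have e : p.1.1 * (2 * c) + p.1.2.1 * (a + c) + p.1.2.2 * (τ * b) =
          p.1.2.1 * a + τ * p.1.2.2 * b + (2 * p.1.1 + p.1.2.1) * c := by ring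
      rw [mul_smul p.1.2.1, hMac, e, Function.comp_apply, key]
      module

theorem norm_sub_vertex_le {E : Type*} [NormedAddCommGroup E] [NormedSpace ℝ E] {A B C v : E}
    {α β γ r : ℝ} (hα : 0 ≤ α) (hβ : 0 ≤ β) (hγ : 0 ≤ γ) (hpos : 0 < α + β + γ) (hr : 0 ≤ r)
    (hv : (α + β + γ) • v = α • A + β • B + γ • C) (hAB : ‖A - B‖ ≤ r) (hBC : ‖B - C‖ ≤ r) :
    ‖v - B‖ ≤ r := by
  have e : (α + β + γ) • (v - B) = α • (A - B) + (-γ) • (B - C) := by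
    rw [smul_sub, hv]; module
  have h := congrArg norm e
  rw [norm_smul, Real.norm_of_nonneg hpos.le] at h
  have h2 := norm_add_le (α • (A - B)) ((-γ) • (B - C))
  rw [← h, norm_smul, norm_smul, norm_neg, Real.norm_of_nonneg hα, Real.norm_of_nonneg hγ] at h2
  have h3 : α * ‖A - B‖ ≤ α * r := by gcongr
  have h4 : γ * ‖B - C‖ ≤ γ * r := by gcongr
  have h5 : 0 ≤ β * r := by positivity
  have h6 : (α + β + γ) * ‖v - B‖ ≤ (α + β + γ) * r := by linarith
  exact le_of_mul_le_mul_left h6 hpos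

theorem word_dist_le {τ : ℝ} (hτ : 0 < τ) (hτ' : τ = 1 ∨ τ = 2) {n : ℕ} {h : Delta → Delta}
    (hw : IsWord (branchD hτ) n h) (p q : Delta) :
    dist (h p) (h q) ≤ 4 * (24 / 25) ^ n := by
  obtain ⟨a, b, c, A, B, C, hW, hAC, hAB, hBC, hQ⟩ := word_vertices hτ hτ' hw
  have hr : (0 : ℝ) ≤ 2 * (24 / 25) ^ n := by positivity
  have key : ∀ p : Delta, dist (h p : ℝ × ℝ × ℝ) B ≤ 2 * (24 / 25) ^ n := by
    intro p
    obtain ⟨hx, hy, hz, hs⟩ := p.2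
    have hc := hW.pos
    have ha : c ≤ a := hW.ca
    have hb : c ≤ b := hW.cb
    have ha0 : 0 ≤ a := by linarith
    have hb0 : 0 ≤ b := by linarith
    have hpos : 0 < p.1.1 * a + p.1.2.1 * b + p.1.2.2 * c := by
      have h1 : p.1.1 * c ≤ p.1.1 * a := by gcongr
      have h2 : p.1.2.1 * c ≤ p.1.2.1 * b := by gcongr
      have h3 : p.1.1 * c + p.1.2.1 * c + p.1.2.2 * c = c := by
        rw [← add_mul, ← add_mul, hs, one_mul]
      linarith
    rw [dist_eq_norm]
    exact norm_sub_vertex_le (by positivity) (by positivity) (by positivity) hpos hr (hQ p)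
      (by linarith) (by linarith)
  calc dist (h p) (h q) = dist (h p : ℝ × ℝ × ℝ) (h q) := rfl
    _ ≤ dist (h p : ℝ × ℝ × ℝ) B + dist (h q : ℝ × ℝ × ℝ) B := dist_triangle_right _ _ _
    _ ≤ 4 * (24 / 25) ^ n := by linarith [key p, key q]

/-- The fold system of `foldMap τ`, with the edges `x = 0`, `y = 0`, `z = 0`. -/
noncomputable def simplexSystem {τ : ℝ} (hτ : 0 < τ) (hτ' : τ = 1 ∨ τ = 2) :
    FoldSystem half {p : Delta | p.1.1 = 0} {p | p.1.2.1 = 0} {p | p.1.2.2 = 0} where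
  f := foldD hτ
  g := branchD hτ
  f_cont := foldD_continuous hτ
  g_cont := branchD_continuous hτ
  f_g := foldD_branchD hτ
  g_f := branchD_foldD hτ
  g_mem := branchD_mem_half hτ
  glue := by
    intro p hp
    have hp' : p.1.1 = 0 := hp
    apply Subtype.ext
    simp [branchD, branch, hp']
  fold := by
    intro p h1 h2
    have h1' : p.1.2.2 ≤ p.1.1 := h1
    have h2' : p.1.1 ≤ p.1.2.2 := h2
    simp [foldD, foldMap, le_antisymm h1' h2']
  f_Ex := by
    intro p hp
    have hp' : p.1.1 = 0 := hp
    have hz : 0 ≤ p.1.2.2 := p.2.2.2.1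
    refine ⟨?_, ?_⟩
    · change p.1.1 ≤ p.1.2.2
      rw [hp']; exact hz
    · simp [foldD, foldMap, hp', hz]
  f_Ey := by
    intro p hp
    have hp' : p.1.2.1 = 0 := hp
    simp [foldD, foldMap, hp']
  f_Ez := by
    intro p hp
    have hp' : p.1.2.2 = 0 := hp
    have hx : 0 ≤ p.1.1 := p.2.1
    refine ⟨?_, ?_⟩
    · change p.1.2.2 ≤ p.1.1
      rw [hp']; exact hx
    · simp [foldD, foldMap, hp', hx]
  g_Ex := by
    intro p hp
    have hp' : p.1.2.1 = 0 := hp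
    simp [branchD, branch, hp']
  g_Ey := by
    intro i p hp
    have hp' : p.1.2.2 = 0 := hp
    simp [branchD, branch, hp']
  g_Ez := by
    intro p hp
    have hp' : p.1.2.1 = 0 := hp
    simp [branchD, branch, hp']
  shrink := by
    refine ⟨fun n => 4 * (24 / 25) ^ n, ?_, fun n h hw p q => word_dist_le hτ hτ' hw p q⟩
    have := (tendsto_pow_atTop_nhds_zero_of_lt_one (r := (24 / 25 : ℝ)) (by norm_num)
      (by norm_num)).const_mul 4
    simpa using this

theorem Delta_closed : IsClosed Delta := by
  have h : Delta = {p | 0 ≤ p.1} ∩ ({p | 0 ≤ p.2.1} ∩ ({p | 0 ≤ p.2.2} ∩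
      {p | p.1 + p.2.1 + p.2.2 = 1})) := rfl
  rw [h]
  refine (isClosed_le ?_ ?_).inter ((isClosed_le ?_ ?_).inter ((isClosed_le ?_ ?_).inter
    (isClosed_eq ?_ ?_))) <;> fun_prop

theorem foldMap_two {p : ℝ × ℝ × ℝ} (hp : p ∈ Delta) : foldMap 2 p = Fmap p := by
  have hN : 2 * (p.1 + p.2.2) + 2 * p.2.1 = 2 := by linarith [hp.2.2.2]
  simp only [foldMap, Fmap, hN]
  ext <;> simp only <;> ring

theorem foldMap_one {p : ℝ × ℝ × ℝ} (hp : p ∈ Delta) : foldMap 1 p = Ftil p := by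
  have hN : 1 * (p.1 + p.2.2) + 2 * p.2.1 = 1 + p.2.1 := by linarith [hp.2.2.2]
  simp only [foldMap, Ftil, hN]
  ext <;> simp only <;> ring

/-- F and F̃ map Δ into Δ, and they are topologically conjugate as self-maps
of Δ: there is a homeomorphism ψ : Δ → Δ with ψ ∘ F = F̃ ∘ ψ on Δ. -/
theorem statement11 :
    (∀ p ∈ Delta, Fmap p ∈ Delta) ∧ (∀ p ∈ Delta, Ftil p ∈ Delta) ∧
    ∃ ψ : Delta ≃ₜ Delta, ∀ (p : Delta) (hF : Fmap ↑p ∈ Delta),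
      (ψ ⟨Fmap ↑p, hF⟩ : ℝ × ℝ × ℝ) = Ftil ↑(ψ p) := by
  refine ⟨fun p hp => foldMap_two hp ▸ foldMap_mem two_pos hp,
    fun p hp => foldMap_one hp ▸ foldMap_mem one_pos hp, ?_⟩
  have : CompleteSpace Delta := Delta_closed.completeSpace_coe
  obtain ⟨ψ, hψ⟩ := FoldSystem.exists_conj half_closed half_cover
    (simplexSystem two_pos (Or.inr rfl)) (simplexSystem one_pos (Or.inl rfl))
  refine ⟨ψ, fun p hF => ?_⟩
  have h1 : (⟨Fmap p, hF⟩ : Delta) = foldD two_pos p := Subtype.ext (foldMap_two p.2).symm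
  rw [h1, ← foldMap_one (ψ p).2]
  exact congrArg Subtype.val (hψ p)
end

section
/- Let i₁, i₂, …, i_n be any finite (possibly empty) sequence over {1,2}, let M = B_{i₁}·B_{i₂}⋯B_{i_n} (the identity matrix if the sequence is empty), and let a, b, c be the sums of the entries of the first, second, and third columns of M, respectively. Then 1/3 < a/c < 3, 1/3 < a/b < 3/2, and 1/3 < c/b < 3/2. -/
/-!
Multiplying `M` on the right by `B₁` or `B₂` sends the vector of column sums `(a, b, c)` to
`(2c, a + c, b)` or `(2a, a + c, b)` respectively. The six inequalities, cleared of denominators,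
cut out an open cone that contains `(1, 1, 1)` and is mapped into itself by both maps: each new
inequality is a nonnegative combination of the old ones. The theorem follows by induction on the
word, appending letters on the right. Positivity of `a, b, c` is implied by membership in the cone.
-/

/-- The matrices B₁ and B₂, indexed by {1,2}. -/
def Bmat : Fin 2 → Matrix (Fin 3) (Fin 3) ℤ :=
  ![!![0, 1, 0; 0, 0, 1; 2, 1, 0], !![2, 1, 0; 0, 0, 1; 0, 1, 0]]

/-- The cone of vectors `(a, b, c)` given by the six inequalities with denominators cleared. -/
def InCone (a b c : ℤ) : Prop :=
  c < 3 * a ∧ a < 3 * c ∧ b < 3 * a ∧ 2 * a < 3 * b ∧ b < 3 * c ∧ 2 * c < 3 * b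

lemma inCone_colSums (w : List (Fin 2)) :
    InCone (∑ i, (w.map Bmat).prod i 0) (∑ i, (w.map Bmat).prod i 1)
      (∑ i, (w.map Bmat).prod i 2) := by
  induction w using List.reverseRecOn with
  | nil => simp [InCone, Matrix.one_apply]
  | append_singleton w j ih =>
    rw [List.map_append, List.prod_append, List.map_singleton, List.prod_singleton]
    generalize (w.map Bmat).prod = M at ih ⊢
    fin_cases j <;>
      simp [InCone, Bmat, Matrix.mul_apply, Fin.sum_univ_three] at ih ⊢ <;> omega

/-- For any (possibly empty) product M = B_{i₁}⋯B_{i_n}, the column sums a, b, c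
of M satisfy 1/3 < a/c < 3, 1/3 < a/b < 3/2 and 1/3 < c/b < 3/2. -/
theorem statement12 (w : List (Fin 2)) :
    let M : Matrix (Fin 3) (Fin 3) ℤ := (w.map Bmat).prod
    let a : ℤ := ∑ i, M i 0
    let b : ℤ := ∑ i, M i 1
    let c : ℤ := ∑ i, M i 2
    (1 / 3 : ℝ) < (a : ℝ) / (c : ℝ) ∧ (a : ℝ) / (c : ℝ) < 3 ∧
    (1 / 3 : ℝ) < (a : ℝ) / (b : ℝ) ∧ (a : ℝ) / (b : ℝ) < 3 / 2 ∧
    (1 / 3 : ℝ) < (c : ℝ) / (b : ℝ) ∧ (c : ℝ) / (b : ℝ) < 3 / 2 := by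
  intro M a b c
  have h : InCone a b c := inCone_colSums w
  clear_value a b c
  obtain ⟨h1, h2, h3, h4, h5, h6⟩ := h
  have hb : (0 : ℝ) < b := by exact_mod_cast (by omega : 0 < b)
  have hc : (0 : ℝ) < c := by exact_mod_cast (by omega : 0 < c)
  rify at h1 h2 h3 h4 h5 h6
  refine ⟨?_, ?_, ?_, ?_, ?_, ?_⟩ <;>
    first
    | rw [lt_div_iff₀ (by assumption)]; linarith
    | rw [div_lt_iff₀ (by assumption)]; linarith
end
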